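/- Let P₀ be a probability measure on ℝ^d whose support is contained in the closed ball of radius R centered at the origin, and let p_t denote the isotropic forward Ornstein–Uhlenbeck marginal density started from P₀. Then for every δ > 0, every t ≥ δ, and every x ∈ ℝ^d, ‖∇² log p_t(x) + (1−e^{−t})^{−1} I_d‖ ≤ (3R²/(1−e^{−δ})²) e^{−t}. (Hessian bound of Corollary 3.9 for bounded-support targets with early stopping.) -/

import Mathlib

open MeasureTheory Real

noncomputable section

/-- Marginal density at time `t > 0` of the isotropic forward Ornstein–Uhlenbeck
process started from the probability measure `P₀`. -/
def ouDensityIso {d : ℕ} (P₀ : Measure (EuclideanSpace ℝ (Fin d)))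
    (t : ℝ) (x : EuclideanSpace ℝ (Fin d)) : ℝ :=
  (2 * π * (1 - Real.exp (-t))) ^ (-(d : ℝ) / 2) *
    ∫ y, Real.exp (-‖x - Real.exp (-t / 2) • y‖ ^ 2 / (2 * (1 - Real.exp (-t)))) ∂P₀

/-!
Completing the square, `log p_t(x) = const - ‖x‖² / (2s) + Λ(x)` with `s = 1 - e^{-t}`, where `Λ` is
the cumulant generating function of `Y = (e^{-t/2} / s) X₀` under a Gaussian reweighting of `P₀`.
The gradient of `Λ` is the mean of `Y` under the exponentially tilted law, that is, under the
posterior of `X₀` given `x`, and its Hessian is the covariance of `Y` under the same law. Hence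
`∇² log p_t(x) + s⁻¹ I` is a posterior covariance, and `‖Cov Y‖ ≤ 𝔼 ‖Y - 𝔼 Y‖² ≤ 𝔼 ‖Y‖²`,
which is at most `e^{-t} R² / s²`.
-/

section ExponentialTilt

open scoped RealInnerProductSpace

open InnerProductSpace (rankOne)

variable {Ω E F : Type*} [MeasurableSpace Ω]
  [NormedAddCommGroup E] [InnerProductSpace ℝ E] [NormedAddCommGroup F] [NormedSpace ℝ F]
  {μ : Measure Ω} {X : Ω → E} {f : Ω → F} {C : ℝ}

lemma exp_inner_le_exp_mul {x v : E} {r : ℝ} (hx : ‖x‖ ≤ r) (hv : ‖v‖ ≤ C) :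
    exp ⟪x, v⟫ ≤ exp (r * C) :=
  exp_le_exp.2 <| (real_inner_le_norm x v).trans <|
    mul_le_mul hx hv (norm_nonneg v) ((norm_nonneg x).trans hx)

lemma norm_exp_inner_smul_le {x v : E} {w : F} {r : ℝ} (hx : ‖x‖ ≤ r) (hv : ‖v‖ ≤ C) :
    ‖exp ⟪x, v⟫ • w‖ ≤ exp (r * C) * ‖w‖ := by
  rw [norm_smul, norm_of_nonneg (exp_pos _).le]
  exact mul_le_mul_of_nonneg_right (exp_inner_le_exp_mul hx hv) (norm_nonneg w)

lemma integrable_exp_inner_smul (hX : AEStronglyMeasurable X μ) (hC : ∀ᵐ ω ∂μ, ‖X ω‖ ≤ C)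
    (hf : Integrable f μ) (x : E) : Integrable (fun ω ↦ exp ⟪x, X ω⟫ • f ω) μ := by
  refine (hf.norm.const_mul (exp (‖x‖ * C))).mono'
    ((continuous_exp.comp_aestronglyMeasurable (aestronglyMeasurable_const.inner hX)).smul hf.1) ?_
  filter_upwards [hC] with ω hω using norm_exp_inner_smul_le le_rfl hω

lemma integrable_exp_inner [IsFiniteMeasure μ] (hX : AEStronglyMeasurable X μ)
    (hC : ∀ᵐ ω ∂μ, ‖X ω‖ ≤ C) (x : E) : Integrable (fun ω ↦ exp ⟪x, X ω⟫) μ := by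
  simpa using integrable_exp_inner_smul hX hC (integrable_const (1 : ℝ)) x

lemma integrable_rankOne_of_ae_bound (hX : AEStronglyMeasurable X μ)
    (hC : ∀ᵐ ω ∂μ, ‖X ω‖ ≤ C) (hf : Integrable f μ) :
    Integrable (fun ω ↦ rankOne ℝ (f ω) (X ω)) μ := by
  refine (hf.norm.mul_const C).mono'
    ((rankOne ℝ (E := F) (F := E)).aestronglyMeasurable_comp₂ hf.1 hX) ?_
  filter_upwards [hC] with ω hω
  rw [InnerProductSpace.norm_rankOne]
  exact mul_le_mul_of_nonneg_left hω (norm_nonneg _)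

lemma hasFDerivAt_exp_inner_smul (v : E) (w : F) (x : E) :
    HasFDerivAt (fun z ↦ exp ⟪z, v⟫ • w) (exp ⟪x, v⟫ • rankOne ℝ w v) x := by
  have h_inner : HasFDerivAt (fun z ↦ ⟪z, v⟫) (innerSL ℝ v) x := by
    simp_rw [real_inner_comm]
    exact (innerSL ℝ v).hasFDerivAt
  refine (h_inner.exp.smul_const w).congr_fderiv ?_
  ext u
  simp [smul_smul]

theorem hasFDerivAt_integral_exp_inner_smul (hX : AEStronglyMeasurable X μ)
    (hC : ∀ᵐ ω ∂μ, ‖X ω‖ ≤ C) (hf : Integrable f μ) (x : E) :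
    HasFDerivAt (fun z ↦ ∫ ω, exp ⟪z, X ω⟫ • f ω ∂μ)
      (∫ ω, exp ⟪x, X ω⟫ • rankOne ℝ (f ω) (X ω) ∂μ) x := by
  have h_rank := integrable_rankOne_of_ae_bound hX hC hf
  refine hasFDerivAt_integral_of_dominated_of_fderiv_le (Metric.ball_mem_nhds x one_pos)
    (.of_forall fun z ↦ (integrable_exp_inner_smul hX hC hf z).1)
    (integrable_exp_inner_smul hX hC hf x)
    (F' := fun z ω ↦ exp ⟪z, X ω⟫ • rankOne ℝ (f ω) (X ω))
    (integrable_exp_inner_smul hX hC h_rank x).1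
    (bound := fun ω ↦ exp ((‖x‖ + 1) * C) * ‖rankOne ℝ (f ω) (X ω)‖) ?_
    (h_rank.norm.const_mul _)
    (.of_forall fun ω z _ ↦ hasFDerivAt_exp_inner_smul (X ω) (f ω) z)
  filter_upwards [hC] with ω hω z hz
  have hz' : ‖z‖ ≤ ‖x‖ + 1 :=
    (norm_le_norm_add_norm_sub' z x).trans (by gcongr; exact (mem_ball_iff_norm.1 hz).le)
  exact norm_exp_inner_smul_le (w := rankOne ℝ (f ω) (X ω)) hz' hω

lemma integral_tilted_eq_inv_smul (μ : Measure Ω) (φ : Ω → ℝ) (f : Ω → F) :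
    ∫ ω, f ω ∂(μ.tilted φ) = (∫ ω, exp (φ ω) ∂μ)⁻¹ • ∫ ω, exp (φ ω) • f ω ∂μ := by
  simp only [integral_tilted, div_eq_inv_mul, ← smul_smul, integral_smul]

/-- The logarithm of the Laplace transform of the law of a random vector `X`, i.e. its cumulant
generating function. -/
def logLaplace (X : Ω → E) (μ : Measure Ω) (x : E) : ℝ :=
  log (∫ ω, exp ⟪x, X ω⟫ ∂μ)

/-- The exponential tilt (Esscher transform) of `μ` along the random vector `X` in direction `x`:
the probability measure with density proportional to `exp ⟪x, X ω⟫`. -/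
def expTilt (X : Ω → E) (μ : Measure Ω) (x : E) : Measure Ω :=
  μ.tilted fun ω ↦ ⟪x, X ω⟫

lemma isProbabilityMeasure_expTilt [IsFiniteMeasure μ] [NeZero μ] (hX : AEStronglyMeasurable X μ)
    (hC : ∀ᵐ ω ∂μ, ‖X ω‖ ≤ C) (x : E) : IsProbabilityMeasure (expTilt X μ x) :=
  isProbabilityMeasure_tilted (integrable_exp_inner hX hC x)

lemma expTilt_absolutelyContinuous (X : Ω → E) (μ : Measure Ω) (x : E) : expTilt X μ x ≪ μ :=
  tilted_absolutelyContinuous μ _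

theorem hasFDerivAt_logLaplace [CompleteSpace E] [IsFiniteMeasure μ] [NeZero μ]
    (hX : AEStronglyMeasurable X μ) (hC : ∀ᵐ ω ∂μ, ‖X ω‖ ≤ C) (x : E) :
    HasFDerivAt (logLaplace X μ) (innerSL ℝ (∫ ω, X ω ∂(expTilt X μ x))) x := by
  have hZ : HasFDerivAt (fun z ↦ ∫ ω, exp ⟪z, X ω⟫ ∂μ)
      (∫ ω, exp ⟪x, X ω⟫ • innerSL ℝ (X ω) ∂μ) x := by
    simpa using hasFDerivAt_integral_exp_inner_smul hX hC (integrable_const (1 : ℝ)) x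
  have hXint : Integrable X μ := .of_bound hX C hC
  refine (hZ.log (integral_exp_pos (integrable_exp_inner hX hC x)).ne').congr_fderiv ?_
  simp only [expTilt, integral_tilted_eq_inv_smul, map_smul,
    ← (innerSL ℝ).integral_comp_comm (integrable_exp_inner_smul hX hC hXint x)]

lemma integral_expTilt_eq_smul [IsFiniteMeasure μ] [NeZero μ] (hX : AEStronglyMeasurable X μ)
    (hC : ∀ᵐ ω ∂μ, ‖X ω‖ ≤ C) (f : Ω → F) (x : E) :
    ∫ ω, f ω ∂(expTilt X μ x) = exp (-logLaplace X μ x) • ∫ ω, exp ⟪x, X ω⟫ • f ω ∂μ := by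
  rw [expTilt, integral_tilted_eq_inv_smul, logLaplace, exp_neg,
    exp_log (integral_exp_pos (integrable_exp_inner hX hC x))]

theorem hasFDerivAt_integral_expTilt [CompleteSpace E] [IsFiniteMeasure μ] [NeZero μ]
    (hX : AEStronglyMeasurable X μ) (hC : ∀ᵐ ω ∂μ, ‖X ω‖ ≤ C) (hf : Integrable f μ) (x : E) :
    HasFDerivAt (fun z ↦ ∫ ω, f ω ∂(expTilt X μ z))
      (∫ ω, rankOne ℝ (f ω) (X ω) ∂(expTilt X μ x) -
        rankOne ℝ (∫ ω, f ω ∂(expTilt X μ x)) (∫ ω, X ω ∂(expTilt X μ x))) x := by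
  have h_deriv := (hasFDerivAt_logLaplace hX hC x).neg.exp.smul
    (hasFDerivAt_integral_exp_inner_smul hX hC hf x)
  simp only [integral_expTilt_eq_smul hX hC f,
    integral_expTilt_eq_smul hX hC fun ω ↦ rankOne ℝ (f ω) (X ω)]
  refine h_deriv.congr_fderiv ?_
  ext v
  simp [smul_smul, mul_comm, sub_eq_add_neg]

end ExponentialTilt

section Covariance

open InnerProductSpace (rankOne)

variable {Ω E F : Type*} [MeasurableSpace Ω]
  [NormedAddCommGroup E] [InnerProductSpace ℝ E] [NormedAddCommGroup F] [NormedSpace ℝ F]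
  {μ : Measure Ω} {X : Ω → E} {f : Ω → F} {C : ℝ}

/-- The covariance operator `𝔼[(X - 𝔼 X) ⊗ (X - 𝔼 X)]` of a random vector `X`. Mathlib's
`ProbabilityTheory.covarianceOperator` is the uncentred second moment. -/
def centeredCovariance (X : Ω → E) (μ : Measure Ω) : E →L[ℝ] E :=
  ∫ ω, rankOne ℝ (X ω - ∫ ω', X ω' ∂μ) (X ω - ∫ ω', X ω' ∂μ) ∂μ

theorem integral_norm_sub_integral_sq [CompleteSpace E] [IsProbabilityMeasure μ]
    (hX : MemLp X 2 μ) :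
    ∫ ω, ‖X ω - ∫ ω', X ω' ∂μ‖ ^ 2 ∂μ = ∫ ω, ‖X ω‖ ^ 2 ∂μ - ‖∫ ω, X ω ∂μ‖ ^ 2 := by
  have hX1 : Integrable X μ := hX.integrable one_le_two
  set m := ∫ ω, X ω ∂μ with hm
  have h_inner : Integrable (fun ω ↦ 2 * inner ℝ m (X ω)) μ := (hX1.const_inner m).const_mul 2
  have h_sq : Integrable (fun ω ↦ ‖X ω‖ ^ 2) μ := hX.integrable_norm_pow two_ne_zero
  have h_diff : Integrable (fun ω ↦ ‖X ω‖ ^ 2 - 2 * inner ℝ m (X ω)) μ := h_sq.sub h_inner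
  simp only [norm_sub_sq_real, real_inner_comm m]
  rw [integral_add h_diff (integrable_const _), integral_sub h_sq h_inner,
    integral_const_mul, integral_inner hX1, ← hm, real_inner_self_eq_norm_sq]
  simp only [integral_const, probReal_univ, smul_eq_mul, one_mul]
  ring

theorem norm_centeredCovariance_le [CompleteSpace E] [IsProbabilityMeasure μ] (hX : MemLp X 2 μ) :
    ‖centeredCovariance X μ‖ ≤ ∫ ω, ‖X ω‖ ^ 2 ∂μ :=
  calc ‖centeredCovariance X μ‖ ≤ ∫ ω, ‖X ω - ∫ ω', X ω' ∂μ‖ ^ 2 ∂μ := by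
        simpa only [centeredCovariance, InnerProductSpace.norm_rankOne, ← sq] using
          norm_integral_le_integral_norm
            fun ω ↦ rankOne ℝ (X ω - ∫ ω', X ω' ∂μ) (X ω - ∫ ω', X ω' ∂μ)
    _ = ∫ ω, ‖X ω‖ ^ 2 ∂μ - ‖∫ ω, X ω ∂μ‖ ^ 2 := integral_norm_sub_integral_sq hX
    _ ≤ ∫ ω, ‖X ω‖ ^ 2 ∂μ := sub_le_self _ (sq_nonneg _)

lemma norm_centeredCovariance_le_sq_of_ae_bound [CompleteSpace E] [IsProbabilityMeasure μ]
    (hX : AEStronglyMeasurable X μ) (hC : ∀ᵐ ω ∂μ, ‖X ω‖ ≤ C) :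
    ‖centeredCovariance X μ‖ ≤ C ^ 2 := by
  have hX2 : MemLp X 2 μ := .of_bound hX C hC
  refine (norm_centeredCovariance_le hX2).trans ?_
  have h_sq : ∀ᵐ ω ∂μ, ‖X ω‖ ^ 2 ≤ C ^ 2 :=
    hC.mono fun ω hω ↦ pow_le_pow_left₀ (norm_nonneg _) hω 2
  simpa using integral_mono_ae (hX2.integrable_norm_pow two_ne_zero) (integrable_const _) h_sq

lemma integral_rankOne_const_right [CompleteSpace F] (hf : Integrable f μ) (v : E) :
    ∫ ω, rankOne ℝ (f ω) v ∂μ = rankOne ℝ (∫ ω, f ω ∂μ) v :=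
  (ContinuousLinearMap.smulRightL ℝ E F (innerSL ℝ v)).integral_comp_comm hf

lemma integral_rankOne_const_left [CompleteSpace E] [CompleteSpace F] (hX : Integrable X μ)
    (w : F) :
    ∫ ω, rankOne ℝ w (X ω) ∂μ = rankOne ℝ w (∫ ω, X ω ∂μ) :=
  ((ContinuousLinearMap.smulRightL ℝ E F).flip w ∘L innerSL ℝ).integral_comp_comm hX

lemma integrable_rankOne_of_memLp_two (hf : MemLp f 2 μ) (hX : MemLp X 2 μ) :
    Integrable (fun ω ↦ rankOne ℝ (f ω) (X ω)) μ := by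
  refine (hf.norm.integrable_mul hX.norm).mono'
    ((rankOne ℝ (E := F) (F := E)).aestronglyMeasurable_comp₂ hf.1 hX.1) (.of_forall fun ω ↦ ?_)
  rw [InnerProductSpace.norm_rankOne, Pi.mul_apply]

theorem centeredCovariance_eq_sub [CompleteSpace E] [IsProbabilityMeasure μ] (hX : MemLp X 2 μ) :
    centeredCovariance X μ =
      ∫ ω, rankOne ℝ (X ω) (X ω) ∂μ - rankOne ℝ (∫ ω, X ω ∂μ) (∫ ω, X ω ∂μ) := by
  have hX1 : Integrable X μ := hX.integrable one_le_two
  set m := ∫ ω, X ω ∂μ with hm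
  have hm2 : MemLp (fun _ : Ω ↦ m) 2 μ := memLp_const m
  have h_dev : MemLp (fun ω ↦ X ω - m) 2 μ := hX.sub hm2
  have h_dev_zero : ∫ ω, (X ω - m) ∂μ = 0 := by
    simp [integral_sub hX1 (integrable_const m), ← hm]
  calc centeredCovariance X μ
      = ∫ ω, rankOne ℝ (X ω - m) (X ω) - rankOne ℝ (X ω - m) m ∂μ := by
        simp only [centeredCovariance, ← hm, map_sub]
    _ = ∫ ω, rankOne ℝ (X ω - m) (X ω) ∂μ := by
        rw [integral_sub (integrable_rankOne_of_memLp_two h_dev hX)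
            (integrable_rankOne_of_memLp_two h_dev hm2),
          integral_rankOne_const_right (h_dev.integrable one_le_two), h_dev_zero]
        simp
    _ = ∫ ω, rankOne ℝ (X ω) (X ω) - rankOne ℝ m (X ω) ∂μ := by
        simp only [map_sub, sub_apply]
    _ = ∫ ω, rankOne ℝ (X ω) (X ω) ∂μ - rankOne ℝ m m := by
        rw [integral_sub (integrable_rankOne_of_memLp_two hX hX)
            (integrable_rankOne_of_memLp_two hm2 hX),
          integral_rankOne_const_left hX1, ← hm]

theorem hasFDerivAt_integral_expTilt_self [CompleteSpace E] [IsFiniteMeasure μ] [NeZero μ]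
    (hX : AEStronglyMeasurable X μ) (hC : ∀ᵐ ω ∂μ, ‖X ω‖ ≤ C) (x : E) :
    HasFDerivAt (fun z ↦ ∫ ω, X ω ∂(expTilt X μ z)) (centeredCovariance X (expTilt X μ x)) x := by
  have := isProbabilityMeasure_expTilt hX hC x
  have h_ac := expTilt_absolutelyContinuous X μ x
  rw [centeredCovariance_eq_sub (.of_bound (hX.mono_ac h_ac) C (h_ac.ae_le hC))]
  exact hasFDerivAt_integral_expTilt hX hC (.of_bound hX C hC) x

end Covariance

section GaussianMixture

open scoped RealInnerProductSpace

variable {Ω E : Type*} [MeasurableSpace Ω] [NormedAddCommGroup E]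
  {μ : Measure Ω} {X : Ω → E} {s C : ℝ}

/-- The logarithm of the mixture, over the law of `X`, of the Gaussians with centre `X` and
covariance `s • id`, without their normalising constant. -/
def logGaussianMixture (X : Ω → E) (s : ℝ) (μ : Measure Ω) (x : E) : ℝ :=
  log (∫ ω, exp (-‖x - X ω‖ ^ 2 / (2 * s)) ∂μ)

/-- The measure `μ` reweighted by the Gaussian factor `exp (-‖X‖² / (2s))` and normalised. -/
def gaussianTilt (X : Ω → E) (s : ℝ) (μ : Measure Ω) : Measure Ω :=
  μ.tilted fun ω ↦ -‖X ω‖ ^ 2 / (2 * s)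

lemma gaussianTilt_absolutelyContinuous (X : Ω → E) (s : ℝ) (μ : Measure Ω) :
    gaussianTilt X s μ ≪ μ :=
  tilted_absolutelyContinuous μ _

lemma integrable_exp_neg_norm_sq_div [IsFiniteMeasure μ] (hX : AEStronglyMeasurable X μ)
    (hs : 0 ≤ s) :
    Integrable (fun ω ↦ exp (-‖X ω‖ ^ 2 / (2 * s))) μ := by
  refine .of_bound (by fun_prop) 1 (.of_forall fun ω ↦ ?_)
  rw [norm_of_nonneg (exp_pos _).le, exp_le_one_iff, neg_div]
  exact neg_nonpos.2 (by positivity)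

lemma isProbabilityMeasure_gaussianTilt [IsFiniteMeasure μ] [NeZero μ]
    (hX : AEStronglyMeasurable X μ) (hs : 0 ≤ s) : IsProbabilityMeasure (gaussianTilt X s μ) :=
  isProbabilityMeasure_tilted (integrable_exp_neg_norm_sq_div hX hs)

variable [InnerProductSpace ℝ E]

/-- The posterior, under the prior `μ`, given that `X` plus independent centred Gaussian noise of
covariance `s • id` equals `x`. Its density is proportional to `exp (-‖x - X‖² / (2s))`, hence to
`exp ⟪x, s⁻¹ • X⟫` relative to the Gaussian tilt. -/
def gaussianPosterior (X : Ω → E) (s : ℝ) (μ : Measure Ω) (x : E) : Measure Ω :=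
  expTilt (fun ω ↦ s⁻¹ • X ω) (gaussianTilt X s μ) x

lemma ae_gaussianTilt_norm_inv_smul_le_div (hC : ∀ᵐ ω ∂μ, ‖X ω‖ ≤ C) (hs : 0 < s) :
    ∀ᵐ ω ∂(gaussianTilt X s μ), ‖s⁻¹ • X ω‖ ≤ C / s := by
  filter_upwards [(gaussianTilt_absolutelyContinuous X s μ).ae_le hC] with ω hω
  rw [norm_smul, norm_inv, norm_of_nonneg hs.le, inv_mul_eq_div]
  gcongr

lemma aestronglyMeasurable_inv_smul_gaussianTilt (hX : AEStronglyMeasurable X μ) :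
    AEStronglyMeasurable (fun ω ↦ s⁻¹ • X ω) (gaussianTilt X s μ) :=
  (hX.mono_ac (gaussianTilt_absolutelyContinuous X s μ)).const_smul s⁻¹

lemma neg_norm_sub_sq_div_eq (x y : E) (hs : s ≠ 0) :
    -‖x - y‖ ^ 2 / (2 * s) = -‖x‖ ^ 2 / (2 * s) + (-‖y‖ ^ 2 / (2 * s) + ⟪x, s⁻¹ • y⟫) := by
  rw [norm_sub_sq_real, real_inner_smul_right]
  field_simp
  ring

lemma integral_exp_neg_norm_sub_sq_div [IsFiniteMeasure μ] [NeZero μ]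
    (hX : AEStronglyMeasurable X μ) (hs : 0 < s) (x : E) :
    ∫ ω, exp (-‖x - X ω‖ ^ 2 / (2 * s)) ∂μ =
      exp (-‖x‖ ^ 2 / (2 * s)) * ((∫ ω, exp (-‖X ω‖ ^ 2 / (2 * s)) ∂μ) *
        ∫ ω, exp ⟪x, s⁻¹ • X ω⟫ ∂(gaussianTilt X s μ)) := by
  have h_pos := integral_exp_pos (integrable_exp_neg_norm_sq_div hX hs.le)
  simp only [neg_norm_sub_sq_div_eq _ _ hs.ne', exp_add (-‖x‖ ^ 2 / (2 * s)), integral_const_mul]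
  rw [gaussianTilt, integral_exp_tilted, mul_div_cancel₀ _ h_pos.ne']
  rfl

theorem logGaussianMixture_eq [IsFiniteMeasure μ] [NeZero μ] (hX : AEStronglyMeasurable X μ)
    (hs : 0 < s) (x : E) :
    logGaussianMixture X s μ x = -‖x‖ ^ 2 / (2 * s) +
      (log (∫ ω, exp (-‖X ω‖ ^ 2 / (2 * s)) ∂μ) +
        logLaplace (fun ω ↦ s⁻¹ • X ω) (gaussianTilt X s μ) x) := by
  have h_meas : AEStronglyMeasurable (fun ω ↦ x - X ω) μ := aestronglyMeasurable_const.sub hX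
  have h_ne : ∫ ω, exp (-‖x - X ω‖ ^ 2 / (2 * s)) ∂μ ≠ 0 :=
    (integral_exp_pos (integrable_exp_neg_norm_sq_div h_meas hs.le)).ne'
  rw [integral_exp_neg_norm_sub_sq_div hX hs] at h_ne
  have h_factors := right_ne_zero_of_mul h_ne
  rw [logGaussianMixture, integral_exp_neg_norm_sub_sq_div hX hs,
    log_mul (exp_ne_zero _) h_factors, log_exp,
    log_mul (left_ne_zero_of_mul h_factors) (right_ne_zero_of_mul h_factors), logLaplace]

lemma hasFDerivAt_neg_norm_sq_div (s : ℝ) (x : E) :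
    HasFDerivAt (fun z : E ↦ -‖z‖ ^ 2 / (2 * s)) (innerSL ℝ (-s⁻¹ • x)) x := by
  simp only [div_eq_mul_inv]
  refine ((hasStrictFDerivAt_norm_sq x).hasFDerivAt.neg.mul_const (2 * s)⁻¹).congr_fderiv ?_
  ext v
  simp only [mul_inv_rev, smul_neg, neg_apply, smul_apply, coe_innerSL_apply, nsmul_eq_mul,
    Nat.cast_ofNat, smul_eq_mul, neg_smul, map_neg, map_smul, neg_inj]
  ring

theorem hasGradientAt_logGaussianMixture [CompleteSpace E] [IsFiniteMeasure μ] [NeZero μ]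
    (hX : AEStronglyMeasurable X μ) (hC : ∀ᵐ ω ∂μ, ‖X ω‖ ≤ C) (hs : 0 < s) (x : E) :
    HasGradientAt (logGaussianMixture X s μ)
      (-s⁻¹ • x + ∫ ω, s⁻¹ • X ω ∂(gaussianPosterior X s μ x)) x := by
  have := isProbabilityMeasure_gaussianTilt hX hs.le
  have h_laplace := hasFDerivAt_logLaplace (aestronglyMeasurable_inv_smul_gaussianTilt hX)
    (ae_gaussianTilt_norm_inv_smul_le_div hC hs) x
  rw [funext (logGaussianMixture_eq hX hs), hasGradientAt_iff_hasFDerivAt]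
  refine ((hasFDerivAt_neg_norm_sq_div s x).add (h_laplace.const_add _)).congr_fderiv ?_
  rw [← map_add]
  rfl

theorem hasFDerivAt_gradient_logGaussianMixture [CompleteSpace E] [IsFiniteMeasure μ] [NeZero μ]
    (hX : AEStronglyMeasurable X μ) (hC : ∀ᵐ ω ∂μ, ‖X ω‖ ≤ C) (hs : 0 < s) (x : E) :
    HasFDerivAt (gradient (logGaussianMixture X s μ))
      (-s⁻¹ • ContinuousLinearMap.id ℝ E +
        centeredCovariance (fun ω ↦ s⁻¹ • X ω) (gaussianPosterior X s μ x)) x := by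
  have := isProbabilityMeasure_gaussianTilt hX hs.le
  rw [funext fun z ↦ (hasGradientAt_logGaussianMixture hX hC hs z).gradient]
  exact ((hasFDerivAt_id x).const_smul (-s⁻¹)).add <| hasFDerivAt_integral_expTilt_self
    (aestronglyMeasurable_inv_smul_gaussianTilt hX) (ae_gaussianTilt_norm_inv_smul_le_div hC hs) x

theorem norm_hessian_logGaussianMixture_add_le [CompleteSpace E] [IsFiniteMeasure μ] [NeZero μ]
    (hX : AEStronglyMeasurable X μ) (hC : ∀ᵐ ω ∂μ, ‖X ω‖ ≤ C) (hs : 0 < s) (x : E) :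
    ‖fderiv ℝ (gradient (logGaussianMixture X s μ)) x + s⁻¹ • ContinuousLinearMap.id ℝ E‖ ≤
      (C / s) ^ 2 := by
  have := isProbabilityMeasure_gaussianTilt hX hs.le
  have h_meas := aestronglyMeasurable_inv_smul_gaussianTilt (s := s) hX
  have h_bound := ae_gaussianTilt_norm_inv_smul_le_div hC hs
  have h_ac := expTilt_absolutelyContinuous (fun ω ↦ s⁻¹ • X ω) (gaussianTilt X s μ) x
  have : IsProbabilityMeasure (gaussianPosterior X s μ x) :=
    isProbabilityMeasure_expTilt h_meas h_bound x
  rw [(hasFDerivAt_gradient_logGaussianMixture hX hC hs x).fderiv, neg_smul,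
    neg_add_cancel_comm]
  exact norm_centeredCovariance_le_sq_of_ae_bound (h_meas.mono_ac h_ac) (h_ac.ae_le h_bound)

end GaussianMixture

section OrnsteinUhlenbeck

variable {d : ℕ} {P : Measure (EuclideanSpace ℝ (Fin d))} [IsFiniteMeasure P] [NeZero P] {R t : ℝ}

lemma one_sub_exp_neg_pos (ht : 0 < t) : 0 < 1 - exp (-t) :=
  sub_pos.2 (exp_lt_one_iff.2 (neg_neg_of_pos ht))

lemma log_ouDensityIso (ht : 0 < t) (x : EuclideanSpace ℝ (Fin d)) :
    log (ouDensityIso P t x) = log ((2 * π * (1 - exp (-t))) ^ (-(d : ℝ) / 2)) +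
      logGaussianMixture (fun y ↦ exp (-t / 2) • y) (1 - exp (-t)) P x := by
  have hs : 0 < 1 - exp (-t) := one_sub_exp_neg_pos ht
  refine log_mul (by positivity) (integral_exp_pos ?_).ne'
  exact integrable_exp_neg_norm_sq_div (by fun_prop) hs.le

lemma gradient_log_ouDensityIso (ht : 0 < t) :
    gradient (fun z ↦ log (ouDensityIso P t z)) =
      gradient (logGaussianMixture (fun y ↦ exp (-t / 2) • y) (1 - exp (-t)) P) := by
  funext z
  simp only [log_ouDensityIso ht, gradient, fderiv_const_add]

theorem norm_hessian_log_ouDensityIso_add_le (hP : ∀ᵐ y ∂P, ‖y‖ ≤ R) (ht : 0 < t)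
    (x : EuclideanSpace ℝ (Fin d)) :
    ‖fderiv ℝ (gradient (fun z ↦ log (ouDensityIso P t z))) x
        + (1 - exp (-t))⁻¹ • ContinuousLinearMap.id ℝ (EuclideanSpace ℝ (Fin d))‖
      ≤ R ^ 2 / (1 - exp (-t)) ^ 2 * exp (-t) := by
  have h_bound : ∀ᵐ y ∂P, ‖exp (-t / 2) • y‖ ≤ exp (-t / 2) * R := by
    filter_upwards [hP] with y hy
    rw [norm_smul, norm_of_nonneg (exp_pos _).le]
    gcongr
  have h_sq : exp (-t / 2) ^ 2 = exp (-t) := by rw [← exp_nat_mul]; ring_nf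
  rw [gradient_log_ouDensityIso ht]
  refine (norm_hessian_logGaussianMixture_add_le (by fun_prop) h_bound
    (one_sub_exp_neg_pos ht) x).trans_eq ?_
  rw [div_pow, mul_pow, h_sq]
  ring

end OrnsteinUhlenbeck

/-- Hessian bound of Corollary 3.9 for bounded-support targets with early stopping. -/
theorem stmt6 {d : ℕ}
    (P₀ : Measure (EuclideanSpace ℝ (Fin d))) [IsProbabilityMeasure P₀]
    (R : ℝ)
    (hsupp : P₀ (Metric.closedBall (0 : EuclideanSpace ℝ (Fin d)) R)ᶜ = 0)
    (δ : ℝ) (hδ : 0 < δ) (t : ℝ) (ht : δ ≤ t) (x : EuclideanSpace ℝ (Fin d)) :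
    ‖fderiv ℝ (gradient (fun z => Real.log (ouDensityIso P₀ t z))) x
        + (1 - Real.exp (-t))⁻¹ • ContinuousLinearMap.id ℝ (EuclideanSpace ℝ (Fin d))‖
      ≤ 3 * R ^ 2 / (1 - Real.exp (-δ)) ^ 2 * Real.exp (-t) := by
  have hP : ∀ᵐ y ∂P₀, ‖y‖ ≤ R :=
    Filter.Eventually.mono (mem_ae_iff.2 hsupp) fun _ ↦ mem_closedBall_zero_iff.1
  have hδ_pos : 0 < 1 - exp (-δ) := one_sub_exp_neg_pos hδ
  calc _ ≤ R ^ 2 / (1 - exp (-t)) ^ 2 * exp (-t) :=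
        norm_hessian_log_ouDensityIso_add_le hP (hδ.trans_le ht) x
    _ ≤ R ^ 2 / (1 - exp (-δ)) ^ 2 * exp (-t) := by gcongr
    _ ≤ 3 * R ^ 2 / (1 - exp (-δ)) ^ 2 * exp (-t) := by
        gcongr
        exact le_mul_of_one_le_left (sq_nonneg R) (by norm_num)
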